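/- arXiv:0905.1860 — 2 statements merged into one kernel-verified Lean document; each statement's English description precedes it below -/
import Mathlib

section
/- (Linear independence of noncrossing symbols.) Let V = ℂ². For an m-partite noncrossing pair partition π of [md], define ω̃_π : (V*)^m → ℂ by ω̃_π(y₁, ..., y_m) = Π_{{i,j} ∈ π, i<j} [y_{c(i)}, y_{c(j)}], where c(i) is the index of the length-d interval containing i and [·,·] is the determinant bracket. Then the family of functions { ω̃_π : π an m-partite noncrossing pair partition of [md] } is linearly independent. -/
/-!
The proof is a leading-term argument. Restrict the symbols to the curve
`y_k = (1, s ^ ((d + 1) ^ k))`. For a pair `i < j` in different intervals the bracket becomes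
`s ^ ((d + 1) ^ c(j)) - s ^ ((d + 1) ^ c(i))`, a monic polynomial in `s` of degree
`(d + 1) ^ c(j)`. Hence the symbol of `π` becomes a monic polynomial of degree
`∑ k, e_k (d + 1) ^ k`, where `e_k ≤ d` is the number of closers (larger elements of a pair) in
the `k`-th interval (`curvePoly_monic`, `curvePoly_natDegree`). Uniqueness of base-`(d + 1)`
expansions recovers all the `e_k` from this degree (`closers_card_eq`).

The numbers `e_k` determine `π`. In each interval all closers precede all openers, since an opener
followed by a closer in the same interval would force a crossing (`closers_lower`); so the `e_k`
determine the set of closers (`closers_eq_of_card_eq`), and a noncrossing pairing is determined by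
its set of closers (`pairing_eq_of_closers`). The restricted symbols are therefore monic
polynomials of pairwise distinct degrees, and these are linearly independent.
-/

/-- The bracket `[v, w]` of two vectors in `ℂ²`: the determinant of the `2 × 2`
matrix with columns `v` and `w`. -/
def bracket (v w : Fin 2 → ℂ) : ℂ := v 0 * w 1 - v 1 * w 0

/-- The index `c(i) ∈ {1, ..., m}` (0-indexed) of the length-`d` interval containing
`i ∈ {1, ..., md}` (0-indexed, so `c(i) = i / d`). -/
def intervalIdx (m d : ℕ) (i : Fin (m * d)) : Fin m :=
  ⟨(i : ℕ) / d, by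
    rcases Nat.eq_zero_or_pos d with h | h
    · subst h; exact absurd i.2 (by simp)
    · exact (Nat.div_lt_iff_lt_mul h).mpr i.2⟩

/-- A pair partition of `{1, ..., N}`, encoded as a fixed-point-free involution: the
blocks are the pairs `{i, σ i}`. -/
def IsPairing {N : ℕ} (σ : Equiv.Perm (Fin N)) : Prop :=
  σ * σ = 1 ∧ ∀ i, σ i ≠ i

/-- The pair partition encoded by `σ` is noncrossing: there are no
`i < i' < j < j'` with `{i, j}` and `{i', j'}` blocks. -/
def PairingNoncrossing {N : ℕ} (σ : Equiv.Perm (Fin N)) : Prop :=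
  ∀ i i' : Fin N, i < i' → i' < σ i → ¬ (σ i < σ i')

/-- The pair partition encoded by `σ` is `m`-partite with respect to the consecutive
intervals of length `d`: each block contains at most one element of each interval,
i.e. the two elements of any pair lie in different intervals. -/
def PairingMPartite (m d : ℕ) (σ : Equiv.Perm (Fin (m * d))) : Prop :=
  ∀ i, intervalIdx m d (σ i) ≠ intervalIdx m d i

/-- The symbol `ω̃_π : (V*)^m → ℂ` of the pair partition `π` (encoded by the
involution `σ`): `ω̃_π(y₁, ..., y_m) = Π_{{i,j} ∈ π, i<j} [y_{c(i)}, y_{c(j)}]`. -/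
noncomputable def symbolFun (m d : ℕ) (σ : Equiv.Perm (Fin (m * d)))
    (y : Fin m → Fin 2 → ℂ) : ℂ :=
  ∏ i ∈ Finset.univ.filter (fun i : Fin (m * d) => i < σ i),
    bracket (y (intervalIdx m d i)) (y (intervalIdx m d (σ i)))

open Polynomial

/-! ### Combinatorics of noncrossing pairings -/

lemma IsPairing.apply_apply {N : ℕ} {σ : Equiv.Perm (Fin N)} (h : IsPairing σ) (i : Fin N) :
    σ (σ i) = i := by
  have := congrArg (fun f : Equiv.Perm (Fin N) => f i) h.1
  simpa using this

lemma IsPairing.lt_or_gt {N : ℕ} {σ : Equiv.Perm (Fin N)} (h : IsPairing σ) (i : Fin N) :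
    σ i < i ∨ i < σ i :=
  lt_or_gt_of_ne (h.2 i)

lemma intervalIdx_mono (m d : ℕ) : Monotone (intervalIdx m d) := by
  intro i j hij
  exact Nat.div_le_div_right (c := d) hij

/-- One half of the induction step of `pairing_eq_of_closers`: if `σ` and `τ` agree on all closers
below the closer `j`, then the partner of `j` under `σ` is not smaller than that under `τ`.
Otherwise `τ j` lies inside the chord `{σ j, j}`, so its `σ`-partner is a closer below `j`, on
which `σ` and `τ` agree, forcing that partner to be `j`. -/
lemma not_partner_lt {N : ℕ} {σ τ : Equiv.Perm (Fin N)} (hσ : IsPairing σ) (hτ : IsPairing τ)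
    (nσ : PairingNoncrossing σ) (h : ∀ i, σ i < i ↔ τ i < i) (j : Fin N) (hj : σ j < j)
    (ih : ∀ k < j, σ k < k → σ k = τ k) : ¬ σ j < τ j := by
  intro hlt
  have hτj : τ j < j := (h j).1 hj
  have hop : τ j < σ (τ j) := by
    rcases hσ.lt_or_gt (τ j) with h1 | h1
    · have h2 := (h _).1 h1
      rw [hτ.apply_apply] at h2
      exact absurd h2 (not_lt.2 hτj.le)
    · exact h1
  have h3 : ¬ j < σ (τ j) := by
    have := nσ (σ j) (τ j) hlt (by rwa [hσ.apply_apply])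
    rwa [hσ.apply_apply] at this
  have h4 : σ (τ j) ≠ j := by
    intro h5
    have : τ j = σ j := by rw [← hσ.apply_apply (τ j), h5]
    exact hlt.ne' this
  have h5 : σ (τ j) < j := lt_of_le_of_ne (not_lt.1 h3) h4
  have h6 := ih _ h5 (by rwa [hσ.apply_apply])
  rw [hσ.apply_apply] at h6
  exact h4 (τ.injective h6.symm)

/-- A noncrossing pairing is determined by its set of closers. -/
lemma pairing_eq_of_closers {N : ℕ} {σ τ : Equiv.Perm (Fin N)} (hσ : IsPairing σ)
    (hτ : IsPairing τ) (nσ : PairingNoncrossing σ) (nτ : PairingNoncrossing τ)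
    (h : ∀ i, σ i < i ↔ τ i < i) : σ = τ := by
  have key : ∀ j : Fin N, σ j < j → σ j = τ j := by
    intro j
    induction j using WellFoundedLT.induction with
    | ind j ih =>
      intro hj
      refine le_antisymm (not_lt.1 ?_) (not_lt.1 ?_)
      · exact not_partner_lt hτ hσ nτ (fun i => (h i).symm) j ((h j).1 hj)
          (fun k hk hk' => (ih k hk ((h k).2 hk')).symm)
      · exact not_partner_lt hσ hτ nσ h j hj ih
  ext1 i
  rcases hσ.lt_or_gt i with hi | hi
  · exact key i hi
  · have := key (σ i) (by rwa [hσ.apply_apply])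
    rw [hσ.apply_apply] at this
    conv_rhs => rw [this]
    rw [hτ.apply_apply]

/-- The closers of `σ` (larger elements of a pair) lying in the `k`-th interval. -/
def closers (m d : ℕ) (σ : Equiv.Perm (Fin (m * d))) (k : Fin m) : Finset (Fin (m * d)) :=
  Finset.univ.filter (fun i => σ i < i ∧ intervalIdx m d i = k)

lemma mem_closers {m d : ℕ} {σ : Equiv.Perm (Fin (m * d))} {k : Fin m} {i : Fin (m * d)} :
    i ∈ closers m d σ k ↔ σ i < i ∧ intervalIdx m d i = k := by
  simp [closers]

/-- Within an interval the closers form an initial segment. -/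
lemma closers_lower {m d : ℕ} {σ : Equiv.Perm (Fin (m * d))} (hσ : IsPairing σ)
    (pσ : PairingMPartite m d σ) (nσ : PairingNoncrossing σ) {k : Fin m} {i j : Fin (m * d)}
    (hi : i ∈ closers m d σ k) (hji : j < i) (hj : intervalIdx m d j = k) :
    j ∈ closers m d σ k := by
  rw [mem_closers] at hi ⊢
  refine ⟨?_, hj⟩
  obtain ⟨hi, hik⟩ := hi
  rcases hσ.lt_or_gt j with h | h
  · exact h
  exfalso
  have h1 : i < σ j := by
    by_contra hc
    have a := intervalIdx_mono m d (not_lt.1 hc)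
    have b := intervalIdx_mono m d h.le
    exact pσ j (le_antisymm (by rwa [hj, ← hik]) b)
  have h2 : σ i < j := by
    by_contra hc
    have a := intervalIdx_mono m d (not_lt.1 hc)
    have b := intervalIdx_mono m d hi.le
    exact pσ i (le_antisymm b (by rwa [hik, ← hj]))
  have := nσ (σ i) j h2 (by rwa [hσ.apply_apply])
  rw [hσ.apply_apply] at this
  exact this h1

lemma closers_eq_of_card_eq {m d : ℕ} {σ τ : Equiv.Perm (Fin (m * d))} (hσ : IsPairing σ)
    (hτ : IsPairing τ) (pσ : PairingMPartite m d σ) (pτ : PairingMPartite m d τ)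
    (nσ : PairingNoncrossing σ) (nτ : PairingNoncrossing τ) (k : Fin m)
    (h : (closers m d σ k).card = (closers m d τ k).card) :
    closers m d σ k = closers m d τ k := by
  -- Two initial segments of the same interval are comparable.
  by_cases hs : closers m d σ k ⊆ closers m d τ k
  · exact Finset.eq_of_subset_of_card_le hs h.ge
  · obtain ⟨a, ha, ha'⟩ := Finset.not_subset.1 hs
    refine (Finset.eq_of_subset_of_card_le (fun b hb => ?_) h.le).symm
    rcases lt_trichotomy a b with hab | hab | hab
    · exact absurd (closers_lower hτ pτ nτ hb hab (mem_closers.1 ha).2) ha'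
    · exact hab ▸ ha
    · exact closers_lower hσ pσ nσ ha hab (mem_closers.1 hb).2

lemma closers_card_le {m d : ℕ} (hd : 1 ≤ d) (σ : Equiv.Perm (Fin (m * d))) (k : Fin m) :
    (closers m d σ k).card ≤ d := by
  have : (closers m d σ k).card ≤ (Finset.range d).card := by
    refine Finset.card_le_card_of_injOn (fun i => (i : ℕ) % d) (fun i _ => ?_) ?_
    · simpa using Nat.mod_lt _ hd
    · intro i hi j hj hij
      have h1 := (mem_closers.1 hi).2.trans (mem_closers.1 hj).2.symm
      have h2 : (i : ℕ) / d = (j : ℕ) / d := congrArg Fin.val h1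
      have h3 : (i : ℕ) % d = (j : ℕ) % d := hij
      ext
      rw [← Nat.div_add_mod (i : ℕ) d, h2, h3, Nat.div_add_mod]
  simpa using this

/-- The numbers of closers in the intervals are base-`(d + 1)` digits, so they are determined by
the number they represent. -/
lemma closers_card_eq {m d : ℕ} (hd : 1 ≤ d) {σ τ : Equiv.Perm (Fin (m * d))}
    (h : ∑ k, (closers m d σ k).card * (d + 1) ^ (k : ℕ) =
      ∑ k, (closers m d τ k).card * (d + 1) ^ (k : ℕ)) (k : Fin m) :
    (closers m d σ k).card = (closers m d τ k).card := by
  let f : Equiv.Perm (Fin (m * d)) → Fin m → Fin (d + 1) := fun ρ k =>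
    ⟨(closers m d ρ k).card, Nat.lt_succ_of_le (closers_card_le hd ρ k)⟩
  have hf : f σ = f τ := by
    apply finFunctionFinEquiv.injective
    ext
    rw [finFunctionFinEquiv_apply, finFunctionFinEquiv_apply]
    exact h
  exact congrArg Fin.val (congrFun hf k)

/-! ### Restriction of the symbols to a monomial curve -/

/-- The symbol of `σ` restricted to the curve `y_k = (1, s ^ ((d + 1) ^ k))`, as a polynomial
in `s`. -/
noncomputable def curvePoly (m d : ℕ) (σ : Equiv.Perm (Fin (m * d))) : ℂ[X] :=
  ∏ i ∈ Finset.univ.filter (fun i : Fin (m * d) => i < σ i),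
    (X ^ ((d + 1) ^ (intervalIdx m d (σ i) : ℕ)) - X ^ ((d + 1) ^ (intervalIdx m d i : ℕ)))

lemma curvePoly_eval (m d : ℕ) (σ : Equiv.Perm (Fin (m * d))) (s : ℂ) :
    (curvePoly m d σ).eval s =
      symbolFun m d σ (fun k => ![1, s ^ ((d + 1) ^ (k : ℕ))]) := by
  simp [curvePoly, symbolFun, bracket, eval_prod]

lemma exponent_lt {m d : ℕ} (hd : 1 ≤ d) {σ : Equiv.Perm (Fin (m * d))}
    (pσ : PairingMPartite m d σ) {i : Fin (m * d)} (hi : i < σ i) :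
    (d + 1) ^ (intervalIdx m d i : ℕ) < (d + 1) ^ (intervalIdx m d (σ i) : ℕ) :=
  Nat.pow_lt_pow_right (by omega)
    (lt_of_le_of_ne (intervalIdx_mono m d hi.le) (Fin.val_ne_of_ne (pσ i).symm))

lemma curvePoly_factor_monic {m d : ℕ} (hd : 1 ≤ d) {σ : Equiv.Perm (Fin (m * d))}
    (pσ : PairingMPartite m d σ) {i : Fin (m * d)} (hi : i < σ i) :
    (X ^ ((d + 1) ^ (intervalIdx m d (σ i) : ℕ)) -
      X ^ ((d + 1) ^ (intervalIdx m d i : ℕ)) : ℂ[X]).Monic := by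
  apply monic_X_pow_sub
  rw [degree_X_pow]
  exact_mod_cast exponent_lt hd pσ hi

lemma curvePoly_monic {m d : ℕ} (hd : 1 ≤ d) {σ : Equiv.Perm (Fin (m * d))}
    (pσ : PairingMPartite m d σ) : (curvePoly m d σ).Monic :=
  monic_prod_of_monic _ _ fun _ hi => curvePoly_factor_monic hd pσ (Finset.mem_filter.1 hi).2

lemma curvePoly_natDegree {m d : ℕ} (hd : 1 ≤ d) {σ : Equiv.Perm (Fin (m * d))}
    (hσ : IsPairing σ) (pσ : PairingMPartite m d σ) :
    (curvePoly m d σ).natDegree = ∑ k, (closers m d σ k).card * (d + 1) ^ (k : ℕ) := by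
  have h1 : (curvePoly m d σ).natDegree =
      ∑ i ∈ Finset.univ.filter (fun i : Fin (m * d) => i < σ i),
        (d + 1) ^ (intervalIdx m d (σ i) : ℕ) := by
    unfold curvePoly
    rw [natDegree_prod_of_monic _ _
      (fun i hi => curvePoly_factor_monic hd pσ (Finset.mem_filter.1 hi).2)]
    refine Finset.sum_congr rfl fun i hi => ?_
    rw [natDegree_sub_eq_left_of_natDegree_lt, natDegree_X_pow]
    simpa using exponent_lt hd pσ (Finset.mem_filter.1 hi).2
  -- Reindex from openers to closers along `σ`.
  have h2 : ∑ i ∈ Finset.univ.filter (fun i : Fin (m * d) => i < σ i),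
        (d + 1) ^ (intervalIdx m d (σ i) : ℕ) =
      ∑ j ∈ Finset.univ.filter (fun j : Fin (m * d) => σ j < j),
        (d + 1) ^ (intervalIdx m d j : ℕ) := by
    refine Finset.sum_bij' (fun i _ => σ i) (fun j _ => σ j) ?_ ?_ ?_ ?_ ?_ <;>
      simp [hσ.apply_apply]
  rw [h1, h2, ← Finset.sum_fiberwise _ (intervalIdx m d)]
  refine Finset.sum_congr rfl fun k _ => ?_
  rw [Finset.filter_filter]
  rw [Finset.sum_congr rfl (g := fun _ => (d + 1) ^ (k : ℕ))
    (fun i hi => by rw [(Finset.mem_filter.1 hi).2.2])]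
  rw [Finset.sum_const, smul_eq_mul, closers]

/-- Monic polynomials of pairwise distinct degrees are linearly independent. -/
lemma linearIndependent_of_monic_of_natDegree_injective {ι : Type*} {P : ι → ℂ[X]}
    (hP : ∀ i, (P i).Monic) (hinj : Function.Injective fun i => (P i).natDegree) :
    LinearIndependent ℂ P := by
  classical
  rw [linearIndependent_iff']
  intro s g hg i hi
  by_contra hgi
  -- Compare coefficients at the largest degree occurring with a nonzero scalar.
  obtain ⟨j, hj, hmax⟩ := (s.filter (fun i => g i ≠ 0)).exists_max_image
    (fun i => (P i).natDegree) ⟨i, Finset.mem_filter.2 ⟨hi, hgi⟩⟩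
  rw [Finset.mem_filter] at hj
  have hc := congrArg (fun p : ℂ[X] => p.coeff (P j).natDegree) hg
  simp only [finsetSum_coeff, coeff_smul, coeff_zero, smul_eq_mul] at hc
  rw [Finset.sum_eq_single_of_mem j hj.1] at hc
  · rw [(hP j).coeff_natDegree, mul_one] at hc
    exact hj.2 hc
  · intro k hk hkj
    by_cases hgk : g k = 0
    · simp [hgk]
    · have hle := hmax k (Finset.mem_filter.2 ⟨hk, hgk⟩)
      rw [coeff_eq_zero_of_natDegree_lt (lt_of_le_of_ne hle fun h => hkj (hinj h)), mul_zero]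

/-- **Linear independence of noncrossing symbols.** The family of symbols
`ω̃_π`, indexed by the `m`-partite noncrossing pair partitions `π` of `{1, ..., md}`,
is linearly independent (in the space of functions `(V*)^m → ℂ`). -/
theorem noncrossing_symbols_linearIndependent (m d : ℕ) (hd : 1 ≤ d) :
    LinearIndependent ℂ
      (fun p : {σ : Equiv.Perm (Fin (m * d)) //
          IsPairing σ ∧ PairingMPartite m d σ ∧ PairingNoncrossing σ} =>
        symbolFun m d p.1) := by
  have hpoly : LinearIndependent ℂ
      (fun p : {σ : Equiv.Perm (Fin (m * d)) //
          IsPairing σ ∧ PairingMPartite m d σ ∧ PairingNoncrossing σ} =>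
        curvePoly m d p.1) := by
    refine linearIndependent_of_monic_of_natDegree_injective
      (fun p => curvePoly_monic hd p.2.2.1) ?_
    rintro ⟨σ, hσ, pσ, nσ⟩ ⟨τ, hτ, pτ, nτ⟩ h
    dsimp only at h
    rw [curvePoly_natDegree hd hσ pσ, curvePoly_natDegree hd hτ pτ] at h
    refine Subtype.ext (pairing_eq_of_closers hσ hτ nσ nτ fun i => ?_)
    have hc := closers_eq_of_card_eq hσ hτ pσ pτ nσ nτ (intervalIdx m d i)
      (closers_card_eq hd h _)
    have hi := Finset.ext_iff.1 hc i
    simpa [mem_closers] using hi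
  rw [linearIndependent_iff'] at hpoly ⊢
  intro s g hg
  refine hpoly s g (Polynomial.funext fun z => ?_)
  have hz := congrFun hg (fun k => ![1, z ^ ((d + 1) ^ (k : ℕ))])
  simpa [eval_finsetSum, curvePoly_eval] using hz
end

section
/- (Thickening bijection.) Let d be even and m ≥ 1. Then the number of m-partite (with respect to intervals of length d) noncrossing pair partitions of [md] equals the number of noncrossing partitions of [md/2] that contain no singleton blocks and are m-partite with respect to the intervals of length d/2 (i.e. every block has at least two elements and contains at most one element from each interval {k(d/2)+1, ..., (k+1)(d/2)}, k = 0, ..., m−1). -/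
/-!
The bijection sends a noncrossing partition `π` of `n` elements to its thickening `thick hN π`:
the element `i` is doubled to the points `2 * i` and `2 * i + 1`, consecutive elements `i < j` of a
block give the pair `{2 * i + 1, 2 * j}`, and the least and greatest elements `j ≤ i` of a block
give `{2 * j, 2 * i + 1}`.

Rather than through pairs, the thickening is defined as an intersection of two equivalence
relations: a point touches one element and one gap between elements, and two points are related
if their elements share a block and their gaps are covered by the same arcs of `π`. This makes it
evidently noncrossing (`thick_noncrossing`). Its blocks are the pairs above (`thick_next`,
`thick_wrap`), and no block has two points of the same parity (`thick_eq_of_parity`), so it is a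
pair partition. The pairs determine `π` (`thick_injective`).

Conversely, given a noncrossing pair partition `ρ`, let `thin n ρ` relate `i` and `j` if the
midpoints of `{2 * i, 2 * i + 1}` and `{2 * j, 2 * j + 1}` are covered by the same arcs of `ρ`.
It is noncrossing because arcs cover intervals. Since paired points have opposite parity
(`parity_ne`), pairs of `ρ` stay related in the thickening of `thin n ρ`, and both being pair
partitions, `thick_thin` follows.

Finally, a pair of the thickening inside an interval of length `d` comes either from a singleton
block of `π` or from two elements of a block inside an interval of length `d / 2`; conversely,
if a block has two elements in one interval, then so do two consecutive ones. Hence the thickening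
is `m`-partite exactly when `π` is `m`-partite without singletons (`thick_isMPartite_iff`).
-/


/-- `i` and `j` lie in the same block of the partition `π`. -/
def SameBlock {n : ℕ} (π : Finpartition (Finset.univ : Finset (Fin n))) (i j : Fin n) : Prop :=
  ∃ B ∈ π.parts, i ∈ B ∧ j ∈ B

/-- A partition of `{1, ..., n}` is noncrossing if there are no
`i < i' < j < j'` with `i ~ j`, `i' ~ j'` and `i ≁ i'`. -/
def IsNoncrossing {n : ℕ} (π : Finpartition (Finset.univ : Finset (Fin n))) : Prop :=
  ∀ i i' j j' : Fin n, i < i' → i' < j → j < j' →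
    SameBlock π i j → SameBlock π i' j' → SameBlock π i i'

/-- A pair partition: every block has exactly two elements. -/
def IsPairPartition {n : ℕ} (π : Finpartition (Finset.univ : Finset (Fin n))) : Prop :=
  ∀ B ∈ π.parts, B.card = 2

/-- An `m`-partite partition (with respect to the consecutive intervals of length `d`):
every block contains at most one element from each interval
`{kd+1, ..., (k+1)d}` (0-indexed: the elements `i` with `i / d = k`). -/
def IsMPartite {n : ℕ} (d : ℕ) (π : Finpartition (Finset.univ : Finset (Fin n))) : Prop :=
  ∀ B ∈ π.parts, ∀ k : ℕ, (B.filter (fun i : Fin n => (i : ℕ) / d = k)).card ≤ 1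


/-! ### Partitions and their block relations -/

theorem sameBlock_refl {n : ℕ} (π : Finpartition (Finset.univ : Finset (Fin n))) (i : Fin n) :
    SameBlock π i i := by
  obtain ⟨B, hB, hi⟩ := π.exists_mem (Finset.mem_univ i)
  exact ⟨B, hB, hi, hi⟩

theorem SameBlock.symm {n : ℕ} {π : Finpartition (Finset.univ : Finset (Fin n))} {i j : Fin n}
    (h : SameBlock π i j) : SameBlock π j i := by
  obtain ⟨B, hB, hi, hj⟩ := h
  exact ⟨B, hB, hj, hi⟩

theorem SameBlock.trans {n : ℕ} {π : Finpartition (Finset.univ : Finset (Fin n))} {i j k : Fin n}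
    (h : SameBlock π i j) (h' : SameBlock π j k) : SameBlock π i k := by
  obtain ⟨B, hB, hi, hj⟩ := h
  obtain ⟨C, hC, hj', hk⟩ := h'
  obtain rfl := π.eq_of_mem_parts hB hC hj hj'
  exact ⟨B, hB, hi, hk⟩

theorem sameBlock_iff_of_mem {n : ℕ} {π : Finpartition (Finset.univ : Finset (Fin n))}
    {B : Finset (Fin n)} (hB : B ∈ π.parts) {i : Fin n} (hi : i ∈ B) (j : Fin n) :
    SameBlock π i j ↔ j ∈ B := by
  constructor
  · rintro ⟨C, hC, hi', hj⟩
    obtain rfl := π.eq_of_mem_parts hB hC hi hi'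
    exact hj
  · exact fun hj => ⟨B, hB, hi, hj⟩

theorem parts_subset_of_sameBlock_iff {n : ℕ}
    {π ρ : Finpartition (Finset.univ : Finset (Fin n))}
    (h : ∀ i j, SameBlock π i j ↔ SameBlock ρ i j) : π.parts ⊆ ρ.parts := by
  intro B hB
  obtain ⟨i, hi⟩ := π.nonempty_of_mem_parts hB
  obtain ⟨C, hC, hi'⟩ := ρ.exists_mem (Finset.mem_univ i)
  have : B = C := by
    ext j
    rw [← sameBlock_iff_of_mem hB hi, ← sameBlock_iff_of_mem hC hi', h]
  rwa [this]

theorem finpartition_ext {n : ℕ} {π ρ : Finpartition (Finset.univ : Finset (Fin n))}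
    (h : ∀ i j, SameBlock π i j ↔ SameBlock ρ i j) : π = ρ :=
  Finpartition.ext (Finset.Subset.antisymm (parts_subset_of_sameBlock_iff h)
    (parts_subset_of_sameBlock_iff fun i j => (h i j).symm))

open Classical in
/-- The partition of `Fin n` into the classes of an equivalence relation. -/
noncomputable def ofRel {n : ℕ} (s : Setoid (Fin n)) :
    Finpartition (Finset.univ : Finset (Fin n)) :=
  Finpartition.ofSetoid s

theorem sameBlock_ofRel {n : ℕ} (s : Setoid (Fin n)) (i j : Fin n) :
    SameBlock (ofRel s) i j ↔ s i j := by
  classical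
  have key : ∀ k : Fin n, ∀ B ∈ (ofRel s).parts, k ∈ B → ∀ l, l ∈ B ↔ s k l := by
    intro k B hB hk l
    simp only [ofRel, Finpartition.ofSetoid, Finpartition.ofSetSetoid, Finset.mem_image,
      Finset.mem_univ, true_and] at hB
    obtain ⟨c, rfl⟩ := hB
    simp only [Finset.mem_filter, Finset.mem_univ, true_and] at hk ⊢
    exact ⟨fun h => s.trans (s.symm hk) h, fun h => s.trans hk h⟩
  obtain ⟨B, hB, hi⟩ := (ofRel s).exists_mem (Finset.mem_univ i)
  rw [sameBlock_iff_of_mem hB hi, key i B hB hi]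

theorem isMPartite_iff {n : ℕ} (d : ℕ) (π : Finpartition (Finset.univ : Finset (Fin n))) :
    IsMPartite d π ↔
      ∀ i j : Fin n, SameBlock π i j → (i : ℕ) / d = (j : ℕ) / d → i = j := by
  unfold IsMPartite
  simp only [Finset.card_le_one, Finset.mem_filter]
  constructor
  · rintro h i j ⟨B, hB, hi, hj⟩ hij
    exact h B hB _ i ⟨hi, hij⟩ j ⟨hj, rfl⟩
  · rintro h B hB k i ⟨hi, hik⟩ j ⟨hj, hjk⟩
    exact h i j ⟨B, hB, hi, hj⟩ (hik.trans hjk.symm)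

theorem two_le_card_iff {n : ℕ} (π : Finpartition (Finset.univ : Finset (Fin n))) :
    (∀ B ∈ π.parts, 2 ≤ B.card) ↔ ∀ i : Fin n, ∃ j, j ≠ i ∧ SameBlock π i j := by
  constructor
  · intro h i
    obtain ⟨B, hB, hi⟩ := π.exists_mem (Finset.mem_univ i)
    obtain ⟨j, hj, hji⟩ := Finset.exists_mem_ne (h B hB) i
    exact ⟨j, hji, B, hB, hi, hj⟩
  · intro h B hB
    obtain ⟨i, hi⟩ := π.nonempty_of_mem_parts hB
    obtain ⟨j, hj, hij⟩ := h i
    exact Finset.one_lt_card.2 ⟨i, hi, j, (sameBlock_iff_of_mem hB hi j).1 hij, hj.symm⟩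

theorem isPairPartition_iff {n : ℕ} (π : Finpartition (Finset.univ : Finset (Fin n))) :
    IsPairPartition π ↔
      ∀ i : Fin n, ∃ j, j ≠ i ∧ ∀ k, SameBlock π i k ↔ k = i ∨ k = j := by
  constructor
  · intro h i
    obtain ⟨B, hB, hi⟩ := π.exists_mem (Finset.mem_univ i)
    obtain ⟨x, y, hxy, rfl⟩ := Finset.card_eq_two.1 (h B hB)
    simp only [sameBlock_iff_of_mem hB hi]
    simp only [Finset.mem_insert, Finset.mem_singleton] at hi ⊢
    rcases hi with rfl | rfl
    · exact ⟨y, hxy.symm, fun k => Iff.rfl⟩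
    · exact ⟨x, hxy, fun k => or_comm⟩
  · intro h B hB
    obtain ⟨i, hi⟩ := π.nonempty_of_mem_parts hB
    obtain ⟨j, hj, hij⟩ := h i
    refine Finset.card_eq_two.2 ⟨i, j, hj.symm, ?_⟩
    ext k
    rw [← sameBlock_iff_of_mem hB hi, hij]
    simp

theorem IsNoncrossing.of_le {n : ℕ} {π : Finpartition (Finset.univ : Finset (Fin n))}
    (h : IsNoncrossing π) {i i' j j' : Fin n} (h₁ : (i : ℕ) ≤ i') (h₂ : (i' : ℕ) ≤ j)
    (h₃ : (j : ℕ) ≤ j') (hij : SameBlock π i j) (hij' : SameBlock π i' j') :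
    SameBlock π i i' := by
  rcases h₁.eq_or_lt with e | h₁
  · obtain rfl := Fin.ext e
    exact sameBlock_refl π i
  rcases h₂.eq_or_lt with e | h₂
  · obtain rfl := Fin.ext e
    exact hij
  rcases h₃.eq_or_lt with e | h₃
  · obtain rfl := Fin.ext e
    exact hij.trans hij'.symm
  exact h i i' j j' h₁ h₂ h₃ hij hij'

theorem exists_least {n : ℕ} {P : Fin n → Prop} (h : ∃ i, P i) :
    ∃ i, P i ∧ ∀ j, P j → (i : ℕ) ≤ j := by
  obtain ⟨i, hi, hmin⟩ := WellFounded.has_min (wellFounded_lt (α := Fin n)) {i | P i} h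
  exact ⟨i, hi, fun j hj => not_lt.1 (hmin j hj)⟩

theorem exists_greatest {n : ℕ} {P : Fin n → Prop} (h : ∃ i, P i) :
    ∃ i, P i ∧ ∀ j, P j → (j : ℕ) ≤ i := by
  obtain ⟨i, hi, hmax⟩ := WellFounded.has_min (wellFounded_gt (α := Fin n)) {i | P i} h
  exact ⟨i, hi, fun j hj => not_lt.1 (hmax j hj)⟩

/-! ### Thickening a partition -/

/-- The element of `Fin n` whose two copies are the points `2 * i` and `2 * i + 1` of `Fin N`. -/
def half {N n : ℕ} (hN : N = 2 * n) (p : Fin N) : Fin n := ⟨p / 2, by omega⟩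

/-- The equivalence relation of the thickening of `π`. The point `p` is adjacent to the element
`p / 2` and to the gap between the elements `(p + 1) / 2 - 1` and `(p + 1) / 2`. Two points are
related if their elements share a block and their gaps lie in the same region of the diagram of `π`,
meaning that they are covered by the same arcs `(x, y)`, where `x` and `y` share a block. -/
def thickSetoid {N n : ℕ} (hN : N = 2 * n) (π : Finpartition (Finset.univ : Finset (Fin n))) :
    Setoid (Fin N) where
  r p q := SameBlock π (half hN p) (half hN q) ∧ ∀ x y : Fin n, SameBlock π x y →
    (((x : ℕ) < ((p : ℕ) + 1) / 2 ∧ ((p : ℕ) + 1) / 2 ≤ y) ↔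
      ((x : ℕ) < ((q : ℕ) + 1) / 2 ∧ ((q : ℕ) + 1) / 2 ≤ y))
  iseqv :=
    { refl := fun _ => ⟨sameBlock_refl π _, fun _ _ _ => Iff.rfl⟩
      symm := fun h => ⟨h.1.symm, fun x y hxy => (h.2 x y hxy).symm⟩
      trans := fun h h' => ⟨h.1.trans h'.1, fun x y hxy => (h.2 x y hxy).trans (h'.2 x y hxy)⟩ }

/-- The thickening of `π`, a partition of a set of twice the size. -/
noncomputable def thick {N n : ℕ} (hN : N = 2 * n)
    (π : Finpartition (Finset.univ : Finset (Fin n))) :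
    Finpartition (Finset.univ : Finset (Fin N)) :=
  ofRel (thickSetoid hN π)

theorem sameBlock_thick {N n : ℕ} {hN : N = 2 * n}
    {π : Finpartition (Finset.univ : Finset (Fin n))} {p q : Fin N} :
    SameBlock (thick hN π) p q ↔ SameBlock π (half hN p) (half hN q) ∧
      ∀ x y : Fin n, SameBlock π x y →
        (((x : ℕ) < ((p : ℕ) + 1) / 2 ∧ ((p : ℕ) + 1) / 2 ≤ y) ↔
          ((x : ℕ) < ((q : ℕ) + 1) / 2 ∧ ((q : ℕ) + 1) / 2 ≤ y)) :=
  sameBlock_ofRel _ _ _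

theorem half_eq {N n : ℕ} {hN : N = 2 * n} {p : Fin N} {i : Fin n} (h : (p : ℕ) / 2 = i) :
    half hN p = i := Fin.ext h

/-- Both defining conditions of the thickening are noncrossing: the first because `π` is, the second
because each arc covers an interval of gaps. -/
theorem thick_noncrossing {N n : ℕ} (hN : N = 2 * n)
    {π : Finpartition (Finset.univ : Finset (Fin n))} (h : IsNoncrossing π) :
    IsNoncrossing (thick hN π) := by
  intro p p' q q' h₁ h₂ h₃ hpq hpq'
  rw [Fin.lt_def] at h₁ h₂ h₃
  rw [sameBlock_thick] at *
  refine ⟨h.of_le (j := half hN q) (j' := half hN q') ?_ ?_ ?_ hpq.1 hpq'.1, fun x y hxy => ?_⟩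
  · exact Nat.div_le_div_right h₁.le
  · exact Nat.div_le_div_right h₂.le
  · exact Nat.div_le_div_right h₃.le
  · have := hpq.2 x y hxy
    have := hpq'.2 x y hxy
    omega

/-- Consecutive elements `i < j` of a block give the pair `{2 * i + 1, 2 * j}`. -/
theorem thick_next {N n : ℕ} (hN : N = 2 * n)
    {π : Finpartition (Finset.univ : Finset (Fin n))} (h : IsNoncrossing π) {i j : Fin n}
    (hij : SameBlock π i j) (hlt : (i : ℕ) < j)
    (hnext : ∀ k, SameBlock π i k → (i : ℕ) < k → (j : ℕ) ≤ k) {p q : Fin N}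
    (hp : (p : ℕ) = 2 * i + 1) (hq : (q : ℕ) = 2 * j) : SameBlock (thick hN π) p q := by
  rw [sameBlock_thick, half_eq (i := i) (by omega), half_eq (i := j) (by omega)]
  refine ⟨hij, fun x y hxy => ?_⟩
  have e₁ : ((p : ℕ) + 1) / 2 = i + 1 := by omega
  have e₂ : ((q : ℕ) + 1) / 2 = j := by omega
  rw [e₁, e₂]
  constructor
  · rintro ⟨hx, hy⟩
    refine ⟨by omega, ?_⟩
    by_contra hc
    have := h.of_le (i := x) (i' := i) (j := y) (j' := j) (by omega) (by omega) (by omega) hxy hij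
    exact hc (hnext y (this.symm.trans hxy) (by omega))
  · rintro ⟨hx, hy⟩
    refine ⟨?_, by omega⟩
    by_contra hc
    have := h.of_le (i := i) (i' := x) (j := j) (j' := y) (by omega) (by omega) (by omega) hij hxy
    have := hnext x this (by omega)
    omega

/-- The least element `j` and the greatest element `i` of a block give the pair
`{2 * j, 2 * i + 1}`. -/
theorem thick_wrap {N n : ℕ} (hN : N = 2 * n)
    {π : Finpartition (Finset.univ : Finset (Fin n))} (h : IsNoncrossing π) {i j : Fin n}
    (hij : SameBlock π i j) (hmax : ∀ k, SameBlock π i k → (k : ℕ) ≤ i)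
    (hmin : ∀ k, SameBlock π i k → (j : ℕ) ≤ k) {p q : Fin N}
    (hp : (p : ℕ) = 2 * i + 1) (hq : (q : ℕ) = 2 * j) : SameBlock (thick hN π) p q := by
  rw [sameBlock_thick, half_eq (i := i) (by omega), half_eq (i := j) (by omega)]
  refine ⟨hij, fun x y hxy => ?_⟩
  have e₁ : ((p : ℕ) + 1) / 2 = i + 1 := by omega
  have e₂ : ((q : ℕ) + 1) / 2 = j := by omega
  have hji := hmax j hij
  rw [e₁, e₂]
  constructor
  · rintro ⟨hx, hy⟩
    refine ⟨?_, by omega⟩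
    by_contra hc
    have := h.of_le (i := j) (i' := x) (j := i) (j' := y) (by omega) (by omega) (by omega)
      hij.symm hxy
    have := hmax y ((hij.trans this).trans hxy)
    omega
  · rintro ⟨hx, hy⟩
    refine ⟨by omega, ?_⟩
    by_contra hc
    have := h.of_le (i := x) (i' := j) (j := y) (j' := i) (by omega) (by omega) (by omega)
      hxy hij.symm
    have := hmin x (hij.trans this.symm)
    omega

theorem thick_exists_partner {N n : ℕ} (hN : N = 2 * n)
    {π : Finpartition (Finset.univ : Finset (Fin n))} (h : IsNoncrossing π) (p : Fin N) :
    ∃ q : Fin N, (q : ℕ) % 2 ≠ (p : ℕ) % 2 ∧ SameBlock (thick hN π) p q := by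
  obtain ⟨k, hk⟩ : ∃ k : Fin n, (p : ℕ) / 2 = k := ⟨half hN p, rfl⟩
  rcases Nat.mod_two_eq_zero_or_one p with hp | hp
  · by_cases hprev : ∃ i, SameBlock π k i ∧ (i : ℕ) < k
    · obtain ⟨i, ⟨hki, hik⟩, hi⟩ := exists_greatest hprev
      refine ⟨⟨2 * i + 1, by omega⟩, by simp only; omega, ?_⟩
      refine (thick_next hN h hki.symm hik (fun l hl hil => ?_) rfl (by omega)).symm
      by_contra hc
      have := hi l ⟨hki.trans hl, by omega⟩
      omega
    · obtain ⟨i, hki, hi⟩ := exists_greatest ⟨k, sameBlock_refl π k⟩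
      refine ⟨⟨2 * i + 1, by omega⟩, by simp only; omega, ?_⟩
      refine (thick_wrap hN h hki.symm (fun l hl => hi l (hki.trans hl))
        (fun l hl => ?_) rfl (by omega)).symm
      by_contra hc
      exact hprev ⟨l, hki.trans hl, by omega⟩
  · by_cases hnext : ∃ i, SameBlock π k i ∧ (k : ℕ) < i
    · obtain ⟨i, ⟨hki, hik⟩, hi⟩ := exists_least hnext
      refine ⟨⟨2 * i, by omega⟩, by simp only; omega, ?_⟩
      exact thick_next hN h hki hik (fun l hl hil => hi l ⟨hl, hil⟩) (by omega) rfl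
    · obtain ⟨i, hki, hi⟩ := exists_least ⟨k, sameBlock_refl π k⟩
      refine ⟨⟨2 * i, by omega⟩, by simp only; omega, ?_⟩
      refine thick_wrap hN h hki (fun l hl => ?_) hi (by omega) rfl
      by_contra hc
      exact hnext ⟨l, hl, by omega⟩

/-- A block of the thickening has at most one point of each parity, because the gaps of two
points of the same parity are separated by the arc joining their elements. -/
theorem thick_eq_of_parity {N n : ℕ} {hN : N = 2 * n}
    {π : Finpartition (Finset.univ : Finset (Fin n))} {p q : Fin N}
    (h : SameBlock (thick hN π) p q) (hpar : (p : ℕ) % 2 = (q : ℕ) % 2) : p = q := by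
  rw [sameBlock_thick] at h
  obtain ⟨h₀, h⟩ := h
  have h₁ := h _ _ h₀
  have h₂ := h _ _ h₀.symm
  simp only [half] at h₁ h₂
  ext
  omega

theorem thick_isPairPartition {N n : ℕ} (hN : N = 2 * n)
    {π : Finpartition (Finset.univ : Finset (Fin n))} (h : IsNoncrossing π) :
    IsPairPartition (thick hN π) := by
  rw [isPairPartition_iff]
  intro p
  obtain ⟨q, hq, hpq⟩ := thick_exists_partner hN h p
  refine ⟨q, fun e => hq (by rw [e]), fun k => ⟨fun hk => ?_, ?_⟩⟩
  · by_cases hkp : (p : ℕ) % 2 = (k : ℕ) % 2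
    · exact Or.inl (thick_eq_of_parity hk hkp).symm
    · exact Or.inr (thick_eq_of_parity (hk.symm.trans hpq) (by omega))
  · rintro (rfl | rfl)
    · exact sameBlock_refl _ _
    · exact hpq

theorem thick_le {N n : ℕ} (hN : N = 2 * n)
    {π ρ : Finpartition (Finset.univ : Finset (Fin n))} (h : IsNoncrossing π)
    (e : thick hN π = thick hN ρ) (t : ℕ) :
    ∀ i j : Fin n, (j : ℕ) = i + t → SameBlock π i j → SameBlock ρ i j := by
  induction t using Nat.strong_induction_on with
  | _ t ih =>
    intro i j ht hij
    rcases Nat.eq_zero_or_pos t with rfl | hpos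
    · obtain rfl : i = j := Fin.ext (by omega)
      exact sameBlock_refl _ _
    obtain ⟨k, ⟨hik, hlt⟩, hk⟩ := exists_least (P := fun k => SameBlock π i k ∧ (i : ℕ) < k)
      ⟨j, hij, by omega⟩
    have hkj := hk j ⟨hij, by omega⟩
    have hthick : SameBlock (thick hN π) ⟨2 * i + 1, by omega⟩ ⟨2 * k, by omega⟩ :=
      thick_next hN h hik hlt (fun l hl hil => hk l ⟨hl, hil⟩) rfl rfl
    rw [e, sameBlock_thick, half_eq (i := i) (by simp only; omega),
      half_eq (i := k) (by simp only; omega)] at hthick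
    exact hthick.1.trans (ih (j - k) (by omega) k j (by omega) (hik.symm.trans hij))

/-- A noncrossing partition is determined by its thickening: consecutive elements of a block are
read off from the pairs, and they chain together to the whole block. -/
theorem thick_injective {N n : ℕ} (hN : N = 2 * n)
    {π ρ : Finpartition (Finset.univ : Finset (Fin n))} (h : IsNoncrossing π)
    (h' : IsNoncrossing ρ) (e : thick hN π = thick hN ρ) : π = ρ := by
  refine finpartition_ext fun i j => ?_
  rcases le_total (i : ℕ) j with hij | hij
  · exact ⟨thick_le hN h e (j - i) i j (by omega), thick_le hN h' e.symm (j - i) i j (by omega)⟩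
  · exact ⟨fun H => (thick_le hN h e (i - j) j i (by omega) H.symm).symm,
      fun H => (thick_le hN h' e.symm (i - j) j i (by omega) H.symm).symm⟩

theorem thick_isMPartite_iff {N n d e : ℕ} (hN : N = 2 * n) (hd : d = 2 * e)
    {π : Finpartition (Finset.univ : Finset (Fin n))} (h : IsNoncrossing π) :
    IsMPartite d (thick hN π) ↔ (∀ B ∈ π.parts, 2 ≤ B.card) ∧ IsMPartite e π := by
  rw [isMPartite_iff, isMPartite_iff, two_le_card_iff]
  subst hd
  -- A point and its element lie in intervals with the same number.
  have hdiv : ∀ p : ℕ, p / (2 * e) = p / 2 / e := fun p => (Nat.div_div_eq_div_mul p 2 e).symm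
  simp only [hdiv]
  constructor
  · intro H
    refine ⟨fun i => ?_, fun i j hij hdij => ?_⟩
    · by_contra! hc
      have hi : ∀ k, SameBlock π i k → k = i := fun k hk => by
        by_contra hki
        exact hc k hki hk
      have := H ⟨2 * i + 1, by omega⟩ ⟨2 * i, by omega⟩
        (thick_wrap hN h (sameBlock_refl π i) (fun k hk => by rw [hi k hk])
          (fun k hk => by rw [hi k hk]) rfl rfl) (by congr 1; simp only; omega)
      simp [Fin.ext_iff] at this
    · have key : ∀ i j : Fin n, (i : ℕ) < j → SameBlock π i j → (i : ℕ) / e = (j : ℕ) / e →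
          False := by
        intro i j hlt hij hdij
        obtain ⟨k, ⟨hik, hlt⟩, hk⟩ := exists_least
          (P := fun k => SameBlock π i k ∧ (i : ℕ) < k) ⟨j, hij, hlt⟩
        have h₁ := Nat.div_le_div_right (c := e) hlt.le
        have h₂ := Nat.div_le_div_right (c := e) (hk j ⟨hij, by omega⟩)
        have e₁ : (2 * (i : ℕ) + 1) / 2 = i := by omega
        have e₂ : (2 * (k : ℕ)) / 2 = k := by omega
        have := H ⟨2 * i + 1, by omega⟩ ⟨2 * k, by omega⟩
          (thick_next hN h hik hlt (fun l hl hil => hk l ⟨hl, hil⟩) rfl rfl)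
          (by simp only [e₁, e₂]; omega)
        simp only [Fin.mk.injEq] at this
        omega
      by_contra hne
      rcases Nat.lt_or_gt_of_ne (fun he => hne (Fin.ext he)) with hlt | hlt
      · exact key i j hlt hij hdij
      · exact key j i hlt hij.symm hdij.symm
  · rintro ⟨H₁, H₂⟩ p q hpq hdpq
    rw [sameBlock_thick] at hpq
    have hh := H₂ _ _ hpq.1 hdpq
    -- If `p ≠ q` are the two copies of one element, the arc to another element of its block
    -- separates the two gaps.
    obtain ⟨j, hj, hpj⟩ := H₁ (half hN p)
    have h₁ := hpq.2 _ _ hpj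
    have h₂ := hpq.2 _ _ hpj.symm
    have hj' : (j : ℕ) ≠ p / 2 := fun he => hj (Fin.ext he)
    have hh' : (p : ℕ) / 2 = q / 2 := congrArg Fin.val hh
    simp only [half] at h₁ h₂
    ext
    omega

/-! ### Every noncrossing pair partition is a thickening -/

/-- Two elements are related if the midpoints of their two copies are covered by the same arcs
of `ρ`. -/
def thinSetoid {N : ℕ} (n : ℕ) (ρ : Finpartition (Finset.univ : Finset (Fin N))) :
    Setoid (Fin n) where
  r i j := ∀ a b : Fin N, SameBlock ρ a b →
    (((a : ℕ) ≤ 2 * i ∧ 2 * (i : ℕ) < b) ↔ ((a : ℕ) ≤ 2 * j ∧ 2 * (j : ℕ) < b))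
  iseqv :=
    { refl := fun _ _ _ _ => Iff.rfl
      symm := fun h a b hab => (h a b hab).symm
      trans := fun h h' a b hab => (h a b hab).trans (h' a b hab) }

/-- The partition of `Fin n` into the regions of the diagram of `ρ`. -/
noncomputable def thin {N : ℕ} (n : ℕ) (ρ : Finpartition (Finset.univ : Finset (Fin N))) :
    Finpartition (Finset.univ : Finset (Fin n)) :=
  ofRel (thinSetoid n ρ)

theorem sameBlock_thin {N n : ℕ} {ρ : Finpartition (Finset.univ : Finset (Fin N))}
    {i j : Fin n} :
    SameBlock (thin n ρ) i j ↔ ∀ a b : Fin N, SameBlock ρ a b →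
      (((a : ℕ) ≤ 2 * i ∧ 2 * (i : ℕ) < b) ↔ ((a : ℕ) ≤ 2 * j ∧ 2 * (j : ℕ) < b)) :=
  sameBlock_ofRel _ _ _

theorem thin_noncrossing {N : ℕ} (n : ℕ) (ρ : Finpartition (Finset.univ : Finset (Fin N))) :
    IsNoncrossing (thin n ρ) := by
  intro i i' j j' h₁ h₂ h₃ hij hij'
  rw [Fin.lt_def] at h₁ h₂ h₃
  rw [sameBlock_thin] at *
  intro a b hab
  have := hij a b hab
  have := hij' a b hab
  omega

/-- Paired points have opposite parity: the points strictly between them are paired among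
themselves, so their number is even. -/
theorem parity_ne {N : ℕ} {ρ : Finpartition (Finset.univ : Finset (Fin N))}
    (h : IsNoncrossing ρ) (hpair : IsPairPartition ρ) {a b : Fin N} (hab : SameBlock ρ a b)
    (hlt : (a : ℕ) < b) : (a : ℕ) % 2 ≠ (b : ℕ) % 2 := by
  rw [isPairPartition_iff] at hpair
  choose f hf hfs using hpair
  have hfsame : ∀ k, SameBlock ρ k (f k) := fun k => (hfs k _).2 (Or.inr rfl)
  have hba : b = f a := ((hfs a b).1 hab).resolve_left (fun e => by rw [e] at hlt; omega)
  have hff : ∀ k, f (f k) = k := fun k =>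
    (((hfs (f k) k).1 (hfsame k).symm).resolve_left (hf k).symm).symm
  have hclosed : ∀ k ∈ Finset.Ioo a b, f k ∈ Finset.Ioo a b := by
    intro k hk
    rw [Finset.mem_Ioo, Fin.lt_def, Fin.lt_def] at hk ⊢
    have hka : ¬ SameBlock ρ a k := fun hak => by
      rcases (hfs a k).1 hak with e | e
      · rw [e] at hk; omega
      · rw [e, ← hba] at hk; omega
    constructor
    · by_contra hc
      exact hka ((h.of_le (i := f k) (i' := a) (j := k) (j' := b) (by omega) (by omega)
        (by omega) (hfsame k).symm hab).symm.trans (hfsame k).symm)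
    · by_contra hc
      exact hka (h.of_le (i := a) (i' := k) (j := b) (j' := f k) (by omega) (by omega)
        (by omega) hab (hfsame k))
  have hsum : ∑ _k ∈ Finset.Ioo a b, (1 : ZMod 2) = 0 :=
    Finset.sum_involution (fun k _ => f k) (fun _ _ => by decide) (fun k _ _ => hf k)
      hclosed (fun k _ => hff k)
  rw [Finset.sum_const, nsmul_one, ZMod.natCast_eq_zero_iff, Fin.card_Ioo] at hsum
  omega

theorem sameBlock_thick_thin_of_lt {N n : ℕ} (hN : N = 2 * n)
    {ρ : Finpartition (Finset.univ : Finset (Fin N))}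
    (h : IsNoncrossing ρ) (hpair : IsPairPartition ρ) {a b : Fin N} (hab : SameBlock ρ a b)
    (hlt : (a : ℕ) < b) : SameBlock (thick hN (thin n ρ)) a b := by
  have hpar := parity_ne h hpair hab hlt
  rw [sameBlock_thick, sameBlock_thin]
  refine ⟨fun c e hce => ?_, fun x y hxy => ?_⟩
  · simp only [half]
    by_cases hle : (c : ℕ) < e
    · -- Another arc cannot end at `a` or `b`, nor cross the arc from `a` to `b`.
      have huniq : SameBlock ρ a c → c = a ∧ e = b := by
        intro hac
        rw [isPairPartition_iff] at hpair
        obtain ⟨b', -, hb'⟩ := hpair a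
        have h₁ := (hb' b).1 hab
        have h₂ := (hb' c).1 hac
        have h₃ := (hb' e).1 (hac.trans hce)
        grind
      by_cases hac : SameBlock ρ a c
      · obtain ⟨rfl, rfl⟩ := huniq hac
        omega
      · have h₁ : ¬ ((a : ℕ) ≤ c ∧ (c : ℕ) ≤ b ∧ (b : ℕ) ≤ e) := fun H =>
          hac (h.of_le H.1 H.2.1 H.2.2 hab hce)
        have h₂ : ¬ ((c : ℕ) ≤ a ∧ (a : ℕ) ≤ e ∧ (e : ℕ) ≤ b) := fun H =>
          hac (h.of_le H.1 H.2.1 H.2.2 hce hab).symm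
        omega
    · omega
  · rw [sameBlock_thin] at hxy
    have := hxy a b hab
    omega

theorem thick_thin {N n : ℕ} (hN : N = 2 * n)
    {ρ : Finpartition (Finset.univ : Finset (Fin N))}
    (h : IsNoncrossing ρ) (hpair : IsPairPartition ρ) : thick hN (thin n ρ) = ρ := by
  have hle : ∀ a b, SameBlock ρ a b → SameBlock (thick hN (thin n ρ)) a b := by
    intro a b hab
    rcases Nat.lt_trichotomy a b with hlt | e | hlt
    · exact sameBlock_thick_thin_of_lt hN h hpair hab hlt
    · obtain rfl := Fin.ext e
      exact sameBlock_refl _ _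
    · exact (sameBlock_thick_thin_of_lt hN h hpair hab.symm hlt).symm
  -- Both partitions consist of pairs, so the inclusion of relations is an equality.
  refine finpartition_ext fun a b => ⟨fun hab => ?_, hle a b⟩
  have hpair' := thick_isPairPartition hN (thin_noncrossing n ρ)
  rw [isPairPartition_iff] at hpair hpair'
  obtain ⟨c, hca, hc⟩ := hpair a
  obtain ⟨c', -, hc'⟩ := hpair' a
  have h₁ := (hc' c).1 (hle a c ((hc c).2 (Or.inr rfl)))
  have h₂ := (hc' b).1 hab
  rw [hc]
  grind

/-- **Thickening bijection.** For even `d` and `m ≥ 1`, the number of `m`-partite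
(with respect to intervals of length `d`) noncrossing pair partitions of `{1, ..., md}`
equals the number of noncrossing partitions of `{1, ..., md/2}` without singleton
blocks that are `m`-partite with respect to the intervals of length `d/2`. -/
theorem thickening_bijection (m d : ℕ) (hm : 1 ≤ m) (hd : Even d) :
    Nat.card {π : Finpartition (Finset.univ : Finset (Fin (m * d))) //
        IsNoncrossing π ∧ IsPairPartition π ∧ IsMPartite d π} =
      Nat.card {π : Finpartition (Finset.univ : Finset (Fin (m * (d / 2)))) //
        IsNoncrossing π ∧ (∀ B ∈ π.parts, 2 ≤ B.card) ∧ IsMPartite (d / 2) π} := by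
  have hd' : d = 2 * (d / 2) := (Nat.two_mul_div_two_of_even hd).symm
  have hN : m * d = 2 * (m * (d / 2)) := by
    rw [Nat.mul_left_comm, ← hd']
  symm
  refine Nat.card_eq_of_bijective (fun π => ⟨thick hN π.1, thick_noncrossing hN π.2.1,
    thick_isPairPartition hN π.2.1, (thick_isMPartite_iff hN hd' π.2.1).2 π.2.2⟩) ⟨?_, ?_⟩
  · intro π ρ e
    exact Subtype.ext (thick_injective hN π.2.1 ρ.2.1 (congrArg Subtype.val e))
  · rintro ⟨ρ, h, hpair, hpart⟩
    have hnc := thin_noncrossing (m * (d / 2)) ρ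
    have e := thick_thin hN h hpair
    exact ⟨⟨thin _ ρ, hnc, (thick_isMPartite_iff hN hd' hnc).1 (by rwa [e])⟩, Subtype.ext e⟩
end
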